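/- Let H > 0 and let μ > 0 be a real number with μ ≠ H/2. There exists a constant C > 0, depending only on μ and H, such that for all 0 ≤ b < t: ∫₀^{(e^{−Hb} − e^{−Ht})/H} ((e^{−bH} + e^{−Ht})² − H²r²)^{μ/H − 3/2} dr ≤ C·e^{−t(μ − H/2)}·e^{−b(μ − 3H/2)} if μ < H/2, and ∫₀^{(e^{−Hb} − e^{−Ht})/H} ((e^{−bH} + e^{−Ht})² − H²r²)^{μ/H − 3/2} dr ≤ C·e^{−2(μ − H)b} if μ > H/2. -/

import Mathlib

/-!
Put `x = e^{-Hb}`, `y = e^{-Ht}`, `a = μ/H - 3/2` and `u = Hr`, so that `0 < y ≤ x` and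
`0 ≤ u ≤ x - y`. The integrand factors as `(x + y + u)^a (x + y - u)^a`. The first factor is
comparable to `x^a`, since `x ≤ x + y + u ≤ 2x`. The second is integrated exactly, giving
`((x + y)^{a+1} - (2y)^{a+1}) / (a + 1)`. For `μ < H/2`, i.e. `a + 1 < 0`, the term
`(2y)^{a+1}` dominates and the product is of order `x^a y^{a+1}`; for `μ > H/2`, i.e.
`a + 1 > 0`, the term `(x + y)^{a+1} ≤ (2x)^{a+1}` dominates and the product is of order
`x^{2a+1}`.
-/

open Real intervalIntegral

lemma rpow_le_max_one_mul_rpow {x z c : ℝ} (a : ℝ) (hx : 0 < x) (hxz : x ≤ z)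
    (hzc : z ≤ c * x) : z ^ a ≤ max 1 (c ^ a) * x ^ a := by
  have hc : 0 < c := pos_of_mul_pos_left (hx.trans_le (hxz.trans hzc)) hx.le
  rcases le_total 0 a with ha | ha
  · calc z ^ a ≤ (c * x) ^ a := rpow_le_rpow (hx.le.trans hxz) hzc ha
      _ = c ^ a * x ^ a := mul_rpow hc.le hx.le
      _ ≤ max 1 (c ^ a) * x ^ a := by gcongr; exact le_max_right _ _
  · calc z ^ a ≤ x ^ a := rpow_le_rpow_of_nonpos hx hxz ha
      _ = 1 * x ^ a := (one_mul _).symm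
      _ ≤ max 1 (c ^ a) * x ^ a := by gcongr; exact le_max_left _ _

lemma integral_const_sub_rpow {p q d a : ℝ}
    (h : -1 < a ∨ a ≠ -1 ∧ (0 : ℝ) ∉ Set.uIcc (d - q) (d - p)) :
    ∫ u in p..q, (d - u) ^ a = ((d - p) ^ (a + 1) - (d - q) ^ (a + 1)) / (a + 1) := by
  rw [integral_comp_sub_left (fun v : ℝ => v ^ a), integral_rpow h]

lemma integral_sq_sub_mul_sq_rpow {H : ℝ} (hH : H ≠ 0) (s L a : ℝ) :
    ∫ r in (0 : ℝ)..(L / H), (s ^ 2 - H ^ 2 * r ^ 2) ^ a =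
      H⁻¹ * ∫ u in (0 : ℝ)..L, (s ^ 2 - u ^ 2) ^ a := by
  simp only [← mul_pow]
  rw [integral_comp_mul_left (fun u : ℝ => (s ^ 2 - u ^ 2) ^ a) hH, mul_zero,
    mul_div_cancel₀ L hH, smul_eq_mul]

lemma exp_neg_mul_rpow_div {H : ℝ} (hH : H ≠ 0) (b c : ℝ) :
    exp (-(H * b)) ^ (c / H) = exp (-(b * c)) := by
  rw [← exp_mul]
  congr 1
  field_simp

section BaseIntegral

variable {x y a : ℝ}

lemma sq_sub_sq_rpow_le {u : ℝ} (hy : 0 < y) (hu : 0 ≤ u) (hux : u ≤ x - y) :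
    ((x + y) ^ 2 - u ^ 2) ^ a ≤ max 1 (2 ^ a) * x ^ a * (x + y - u) ^ a := by
  rw [sq_sub_sq, mul_rpow (by linarith) (by linarith)]
  have hsub : 0 ≤ x + y - u := by linarith
  gcongr
  exact rpow_le_max_one_mul_rpow a (by linarith) (by linarith) (by linarith)

lemma integral_sq_sub_sq_rpow_le (hy : 0 < y) (hyx : y ≤ x) (ha : a ≠ -1) :
    ∫ u in (0 : ℝ)..(x - y), ((x + y) ^ 2 - u ^ 2) ^ a ≤
      max 1 (2 ^ a) * x ^ a * (((x + y) ^ (a + 1) - (2 * y) ^ (a + 1)) / (a + 1)) := by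
  have hxy : 0 ≤ x - y := sub_nonneg.2 hyx
  have hexact : ∫ u in (0 : ℝ)..(x - y), (x + y - u) ^ a =
      ((x + y) ^ (a + 1) - (2 * y) ^ (a + 1)) / (a + 1) := by
    have hendpoint : x + y - (x - y) = 2 * y := by ring
    rw [integral_const_sub_rpow, hendpoint, sub_zero]
    exact Or.inr ⟨ha, Set.notMem_uIcc_of_lt (by linarith) (by linarith)⟩
  rw [← hexact, ← integral_const_mul]
  refine integral_mono_on hxy (ContinuousOn.intervalIntegrable_of_Icc hxy ?_)
    (ContinuousOn.intervalIntegrable_of_Icc hxy ?_)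
    fun u hu => sq_sub_sq_rpow_le hy hu.1 hu.2
  · refine ContinuousOn.rpow_const (by fun_prop) fun u hu => Or.inl (ne_of_gt ?_)
    exact sub_pos.2 (pow_lt_pow_left₀ (by linarith [hu.2]) hu.1 two_ne_zero)
  · refine continuousOn_const.mul (ContinuousOn.rpow_const (by fun_prop) fun u hu => Or.inl ?_)
    linarith [hu.2]

/-- The constant `max(1, 2^a) 2^{a+1} / |a + 1|` in the estimates of
`∫₀^{x-y} ((x + y)² - u²)^a du`, meaningful for `a ≠ -1`: the maximum bounds
`((x + y + u) / x)^a`, and the other factor comes from integrating `(x + y - u)^a`. -/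
noncomputable def baseIntegralConst (a : ℝ) : ℝ :=
  max 1 (2 ^ a) * (2 ^ (a + 1) / |a + 1|)

lemma baseIntegralConst_pos (ha : a ≠ -1) : 0 < baseIntegralConst a := by
  have : 0 < |a + 1| := abs_pos.2 fun h => ha (eq_neg_of_add_eq_zero_left h)
  unfold baseIntegralConst
  positivity

lemma integral_sq_sub_sq_rpow_le_of_lt (hy : 0 < y) (hyx : y ≤ x) (ha : a < -1) :
    ∫ u in (0 : ℝ)..(x - y), ((x + y) ^ 2 - u ^ 2) ^ a ≤
      baseIntegralConst a * (x ^ a * y ^ (a + 1)) := by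
  have hx : 0 < x := hy.trans_le hyx
  have hneg : a + 1 < 0 := by linarith
  have hdom : ((x + y) ^ (a + 1) - (2 * y) ^ (a + 1)) / (a + 1) ≤
      2 ^ (a + 1) * y ^ (a + 1) / |a + 1| := by
    rw [← mul_rpow zero_le_two hy.le, abs_of_neg hneg, ← neg_div_neg_eq, neg_sub]
    gcongr
    · linarith
    · exact sub_le_self _ (by positivity)
  calc _ ≤ _ := integral_sq_sub_sq_rpow_le hy hyx ha.ne
    _ ≤ max 1 (2 ^ a) * x ^ a * (2 ^ (a + 1) * y ^ (a + 1) / |a + 1|) := by gcongr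
    _ = baseIntegralConst a * (x ^ a * y ^ (a + 1)) := by unfold baseIntegralConst; ring

lemma integral_sq_sub_sq_rpow_le_of_gt (hy : 0 < y) (hyx : y ≤ x) (ha : -1 < a) :
    ∫ u in (0 : ℝ)..(x - y), ((x + y) ^ 2 - u ^ 2) ^ a ≤
      baseIntegralConst a * x ^ (2 * a + 1) := by
  have hx : 0 < x := hy.trans_le hyx
  have hpos : 0 < a + 1 := by linarith
  have hdom : ((x + y) ^ (a + 1) - (2 * y) ^ (a + 1)) / (a + 1) ≤
      2 ^ (a + 1) * x ^ (a + 1) / |a + 1| := by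
    rw [← mul_rpow zero_le_two hx.le, abs_of_pos hpos]
    gcongr
    calc (x + y) ^ (a + 1) - (2 * y) ^ (a + 1) ≤ (x + y) ^ (a + 1) :=
          sub_le_self _ (by positivity)
      _ ≤ (2 * x) ^ (a + 1) := by gcongr; linarith
  have hexp : x ^ (2 * a + 1) = x ^ a * x ^ (a + 1) := by
    rw [← rpow_add hx]
    ring_nf
  calc _ ≤ _ := integral_sq_sub_sq_rpow_le hy hyx ha.ne'
    _ ≤ max 1 (2 ^ a) * x ^ a * (2 ^ (a + 1) * x ^ (a + 1) / |a + 1|) := by gcongr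
    _ = baseIntegralConst a * x ^ (2 * a + 1) := by rw [hexp]; unfold baseIntegralConst; ring

end BaseIntegral

theorem E_derivative_base_integral_estimate_general (H μ : ℝ) (hH : 0 < H) (hμ2 : μ ≠ H / 2) :
    ∃ C > (0 : ℝ), ∀ b t : ℝ, b ≤ t →
      (μ < H / 2 →
        (∫ r in (0 : ℝ)..((exp (-(H * b)) - exp (-(H * t))) / H),
            ((exp (-(b * H)) + exp (-(H * t))) ^ 2 - H ^ 2 * r ^ 2) ^
              (μ / H - 3 / 2)) ≤
          C * exp (-(t * (μ - H / 2))) * exp (-(b * (μ - 3 * H / 2)))) ∧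
      (H / 2 < μ →
        (∫ r in (0 : ℝ)..((exp (-(H * b)) - exp (-(H * t))) / H),
            ((exp (-(b * H)) + exp (-(H * t))) ^ 2 - H ^ 2 * r ^ 2) ^
              (μ / H - 3 / 2)) ≤
          C * exp (-(2 * (μ - H) * b))) := by
  set a := μ / H - 3 / 2 with ha
  have ha_eq : a = (μ - 3 * H / 2) / H := by rw [ha]; field_simp
  have ha_add_one : a + 1 = (μ - H / 2) / H := by rw [ha]; field_simp; ring
  have htwo_mul_add_one : 2 * a + 1 = 2 * (μ - H) / H := by rw [ha]; field_simp; ring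
  have hane : a ≠ -1 := by
    rw [← sub_ne_zero, sub_neg_eq_add, ha_add_one]
    exact div_ne_zero (sub_ne_zero.2 hμ2) hH.ne'
  refine ⟨H⁻¹ * baseIntegralConst a, mul_pos (inv_pos.2 hH) (baseIntegralConst_pos hane),
    fun b t hbt => ?_⟩
  have hy : 0 < exp (-(H * t)) := exp_pos _
  have hyx : exp (-(H * t)) ≤ exp (-(H * b)) := by gcongr
  rw [mul_comm b H, integral_sq_sub_mul_sq_rpow hH.ne']
  refine ⟨fun hlt => ?_, fun hgt => ?_⟩
  · have hneg : a + 1 < 0 := ha_add_one ▸ div_neg_of_neg_of_pos (sub_neg.2 hlt) hH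
    have hx_rpow : exp (-(H * b)) ^ a = exp (-(b * (μ - 3 * H / 2))) := by
      rw [ha_eq, exp_neg_mul_rpow_div hH.ne']
    have hy_rpow : exp (-(H * t)) ^ (a + 1) = exp (-(t * (μ - H / 2))) := by
      rw [ha_add_one, exp_neg_mul_rpow_div hH.ne']
    rw [← hx_rpow, ← hy_rpow, mul_assoc, mul_assoc, mul_comm (exp (-(H * t)) ^ (a + 1))]
    gcongr
    exact integral_sq_sub_sq_rpow_le_of_lt hy hyx (by linarith)
  · have hpos : 0 < a + 1 := ha_add_one ▸ div_pos (sub_pos.2 hgt) hH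
    have hx_rpow : exp (-(H * b)) ^ (2 * a + 1) = exp (-(2 * (μ - H) * b)) := by
      rw [htwo_mul_add_one, exp_neg_mul_rpow_div hH.ne', mul_comm b]
    rw [← hx_rpow, mul_assoc]
    gcongr
    exact integral_sq_sub_sq_rpow_le_of_gt hy hyx (by linarith)

/-- Lemma in Section 6 of the paper: for `μ > 0`, `μ ≠ H/2`, there is
`C = C_{μ,H} > 0` such that for all `0 ≤ b < t`:
`∫₀^{(e^{−Hb}−e^{−Ht})/H} ((e^{−bH}+e^{−Ht})² − H²r²)^{μ/H − 3/2} dr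
  ≤ C e^{−t(μ−H/2)} e^{−b(μ−3H/2)}` if `μ < H/2`, and `≤ C e^{−2(μ−H)b}` if `μ > H/2`. -/
theorem E_derivative_base_integral_estimate (H μ : ℝ) (hH : 0 < H) (hμ : 0 < μ)
    (hμ2 : μ ≠ H / 2) :
    ∃ C > (0 : ℝ), ∀ b t : ℝ, 0 ≤ b → b < t →
      (μ < H / 2 →
        (∫ r in (0 : ℝ)..((Real.exp (-(H * b)) - Real.exp (-(H * t))) / H),
            ((Real.exp (-(b * H)) + Real.exp (-(H * t))) ^ 2 - H ^ 2 * r ^ 2) ^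
              (μ / H - 3 / 2)) ≤
          C * Real.exp (-(t * (μ - H / 2))) * Real.exp (-(b * (μ - 3 * H / 2)))) ∧
      (H / 2 < μ →
        (∫ r in (0 : ℝ)..((Real.exp (-(H * b)) - Real.exp (-(H * t))) / H),
            ((Real.exp (-(b * H)) + Real.exp (-(H * t))) ^ 2 - H ^ 2 * r ^ 2) ^
              (μ / H - 3 / 2)) ≤
          C * Real.exp (-(2 * (μ - H) * b))) := by
  obtain ⟨C, hC, hbound⟩ := E_derivative_base_integral_estimate_general H μ hH hμ2
  exact ⟨C, hC, fun b t _ hbt => hbound b t hbt.le⟩
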